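/- Let (A,m) be a commutative Noetherian local ring. For bounded complexes X, Y of finitely generated A-modules whose cohomology has finite length, the module Hom_{D^b(A)}(X, Y) of morphisms in the bounded derived category has finite length as an A-module. Consequently D^b_f(A) is Hom-finite. -/

import Mathlib

set_option maxHeartbeats 1000000

open CategoryTheory Limits

variable (A : Type) [CommRing A] [HasDerivedCategory.{0} (ModuleCat.{0} A)]

/-- The natural `A`-module structure on morphisms in the derived category of `A`-modules,
with `r • f = f ≫ Q.map (r • 𝟙 Y)`. -/
noncomputable def derivedHomModule (X Y : CochainComplex (ModuleCat.{0} A) ℤ) :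
    Module A (DerivedCategory.Q.obj X ⟶ DerivedCategory.Q.obj Y) where
  smul r f := f ≫ DerivedCategory.Q.map (r • 𝟙 Y)
  one_smul f := by
    show f ≫ DerivedCategory.Q.map ((1 : A) • 𝟙 Y) = f
    rw [one_smul, CategoryTheory.Functor.map_id, Category.comp_id]
  mul_smul r s f := by
    have h : (s • 𝟙 Y) ≫ (r • 𝟙 Y) = (r * s) • 𝟙 Y := by
      rw [Linear.smul_comp, Linear.comp_smul, Category.comp_id, smul_smul, mul_comm]
    show f ≫ DerivedCategory.Q.map ((r * s) • 𝟙 Y) =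
      (f ≫ DerivedCategory.Q.map (s • 𝟙 Y)) ≫ DerivedCategory.Q.map (r • 𝟙 Y)
    rw [← h, CategoryTheory.Functor.map_comp, ← Category.assoc]
  smul_zero r := by
    show (0 : DerivedCategory.Q.obj X ⟶ DerivedCategory.Q.obj Y) ≫
        DerivedCategory.Q.map (r • 𝟙 Y) = 0
    rw [Limits.zero_comp]
  smul_add r f g := by
    show (f + g) ≫ DerivedCategory.Q.map (r • 𝟙 Y) =
      f ≫ DerivedCategory.Q.map (r • 𝟙 Y) + g ≫ DerivedCategory.Q.map (r • 𝟙 Y)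
    rw [Preadditive.add_comp]
  add_smul r s f := by
    show f ≫ DerivedCategory.Q.map ((r + s) • 𝟙 Y) =
      f ≫ DerivedCategory.Q.map (r • 𝟙 Y) + f ≫ DerivedCategory.Q.map (s • 𝟙 Y)
    rw [add_smul, CategoryTheory.Functor.map_add, Preadditive.comp_add]
  zero_smul f := by
    show f ≫ DerivedCategory.Q.map ((0 : A) • 𝟙 Y) = 0
    rw [zero_smul, CategoryTheory.Functor.map_zero, Limits.comp_zero]

/-! For fixed `X` and `Y`, the objects `Z` with `Hom(Z, Y)` of finite length, and those with
`Hom(X, Z)` of finite length, are closed under extensions in distinguished triangles. The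
truncation triangles exhibit an object as an iterated extension of its shifted cohomology modules,
up to a far truncation that has no nonzero morphism to `Y` (resp. from `X`). Applied to `X` and
then to `Y`, this reduces the claim to `Ext` from a finitely generated module to a module of finite
length, which dimension shifting reduces to `Hom`. -/

open Pretriangulated DerivedCategory Abelian

universe w v u

section FiniteLength

variable {R M N P : Type*} [AddCommGroup M] [AddCommGroup N] [AddCommGroup P]

theorem isFiniteLength_of_exact [Ring R] [Module R M] [Module R N] [Module R P]
    {f : M →ₗ[R] N} {g : N →ₗ[R] P} (hfg : Function.Exact f g)
    (hM : IsFiniteLength R M) (hP : IsFiniteLength R P) : IsFiniteLength R N := by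
  rw [isFiniteLength_iff_isNoetherian_isArtinian] at hM hP ⊢
  obtain ⟨_, _⟩ := hM
  obtain ⟨_, _⟩ := hP
  have hrange : LinearMap.range f = LinearMap.ker g := hfg.linearMap_ker_eq.symm
  exact ⟨isNoetherian_of_range_eq_ker f g hrange, isArtinian_of_range_eq_ker f g hrange⟩

theorem finite_of_isFiniteLength [Ring R] [Module R M] (hM : IsFiniteLength R M) :
    Module.Finite R M :=
  have := (isFiniteLength_iff_isNoetherian_isArtinian.mp hM).1
  inferInstance

theorem isFiniteLength_linearMap [CommRing R] [Module R M] [Module R N] [Module.Finite R N]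
    (hM : IsFiniteLength R M) : IsFiniteLength R (N →ₗ[R] M) := by
  obtain ⟨n, p, hp⟩ := Module.Finite.exists_fin' R N
  have hpi : IsFiniteLength R (Fin n → M) := by
    rw [isFiniteLength_iff_isNoetherian_isArtinian] at hM ⊢
    obtain ⟨_, _⟩ := hM
    exact ⟨inferInstance, inferInstance⟩
  have hfree : IsFiniteLength R ((Fin n → R) →ₗ[R] M) :=
    (Module.piEquiv (Fin n) R M).isFiniteLength hpi
  exact hfree.of_injective (f := LinearMap.lcomp R M p)
    (LinearMap.lcomp_injective_of_surjective p hp)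

theorem isFiniteLength_ext {R : Type u} [CommRing R] [Small.{v} R] [IsNoetherianRing R]
    (N M : ModuleCat.{v} R) [Module.Finite R N] (hM : IsFiniteLength R M) (i : ℕ) :
    IsFiniteLength R (Ext N M i) := by
  induction i generalizing N with
  | zero =>
    exact (Ext.linearEquiv₀.trans ModuleCat.homLinearEquiv).symm.isFiniteLength
      (isFiniteLength_linearMap hM)
  | succ n ih =>
    obtain ⟨F, _, _, _, _, p, hp⟩ := Module.exists_finite_presentation R N
    have hses := LinearMap.shortExact_shortComplexKer hp
    exact (ih _).of_surjective (f := hses.extClass.precompOfLinear R M (add_comm 1 n))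
      (precomp_extClass_surjective_of_projective_X₂ M hses n)

end FiniteLength

section Triangulated

variable (k : Type*) {D : Type*} [Ring k] [Category* D] [Preadditive D] [Linear k D]

/-- The objects `X` such that `Hom(X, Y)` has finite length over `k`. -/
def finiteLengthHomTo (Y : D) : ObjectProperty D := fun X ↦ IsFiniteLength k (X ⟶ Y)

/-- The objects `Y` such that `Hom(X, Y)` has finite length over `k`. -/
def finiteLengthHomFrom (X : D) : ObjectProperty D := fun Y ↦ IsFiniteLength k (X ⟶ Y)

instance (Y : D) : (finiteLengthHomTo k Y).IsClosedUnderIsomorphisms :=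
  ⟨fun e hX ↦ (Linear.homCongr k e (Iso.refl Y)).isFiniteLength hX⟩

instance (X : D) : (finiteLengthHomFrom k X).IsClosedUnderIsomorphisms :=
  ⟨fun e hY ↦ (Linear.homCongr k (Iso.refl X) e).isFiniteLength hY⟩

variable [HasZeroObject D] [HasShift D ℤ] [∀ n : ℤ, (shiftFunctor D n).Additive]
  [Pretriangulated D]

instance (Y : D) : (finiteLengthHomTo k Y).IsTriangulatedClosed₂ := by
  refine .mk' fun T hT h₁ h₃ ↦ ?_
  refine isFiniteLength_of_exact (f := Linear.leftComp k Y T.mor₂)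
    (g := Linear.leftComp k Y T.mor₁) (fun φ ↦ ⟨fun hφ ↦ ?_, ?_⟩) h₃ h₁
  · obtain ⟨ψ, hψ⟩ := T.yoneda_exact₂ hT φ hφ
    exact ⟨ψ, hψ.symm⟩
  · rintro ⟨ψ, rfl⟩
    simp [comp_distTriang_mor_zero₁₂_assoc _ hT]

instance (X : D) : (finiteLengthHomFrom k X).IsTriangulatedClosed₂ := by
  refine .mk' fun T hT h₁ h₃ ↦ ?_
  refine isFiniteLength_of_exact (f := Linear.rightComp k X T.mor₁)
    (g := Linear.rightComp k X T.mor₂) (fun φ ↦ ⟨fun hφ ↦ ?_, ?_⟩) h₁ h₃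
  · obtain ⟨ψ, hψ⟩ := T.coyoneda_exact₂ hT φ hφ
    exact ⟨ψ, hψ.symm⟩
  · rintro ⟨ψ, rfl⟩
    simp [comp_distTriang_mor_zero₁₂ _ hT]

variable {k} in
theorem isFiniteLength_hom_of_isLE_of_isGE (t : Triangulated.TStructure D) {X Y : D} {m n : ℤ}
    (hmn : m < n) [t.IsLE X m] [t.IsGE Y n] : IsFiniteLength k (X ⟶ Y) :=
  have : Subsingleton (X ⟶ Y) := subsingleton_of_forall_eq 0 fun f ↦ t.zero f m n hmn
  .of_subsingleton

end Triangulated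

section Truncation

variable {C : Type u} [Category.{v} C] [Abelian C] [HasDerivedCategory.{w} C]

theorem isIso_homologyFunctor_map_truncLTι (X : DerivedCategory C) {i n : ℤ} (hi : i < n) :
    IsIso ((homologyFunctor C i).map ((TStructure.t.truncLTι n).app X)) := by
  have hT := TStructure.t.triangleLTGE_distinguished n X
  have hepi : Epi ((homologyFunctor C i).map ((TStructure.t.truncLTι n).app X)) :=
    (HomologySequence.epi_homologyMap_mor₁_iff _ hT i).2
      ((isZero_of_isGE _ n i hi).eq_of_tgt _ _)
  have hmono : Mono ((homologyFunctor C i).map ((TStructure.t.truncLTι n).app X)) :=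
    (HomologySequence.mono_homologyMap_mor₁_iff _ hT (i - 1) i).2
      ((isZero_of_isGE _ n (i - 1) (by lia)).eq_of_src _ _)
  exact isIso_of_mono_of_epi _

theorem isIso_homologyFunctor_map_truncGEπ (X : DerivedCategory C) {i n : ℤ} (hi : n ≤ i) :
    IsIso ((homologyFunctor C i).map ((TStructure.t.truncGEπ n).app X)) := by
  have hT := TStructure.t.triangleLTGE_distinguished n X
  have hepi : Epi ((homologyFunctor C i).map ((TStructure.t.truncGEπ n).app X)) :=
    (HomologySequence.epi_homologyMap_mor₂_iff _ hT i (i + 1)).2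
      ((isZero_of_isLE _ (n - 1) (i + 1) (by lia)).eq_of_tgt _ _)
  have hmono : Mono ((homologyFunctor C i).map ((TStructure.t.truncGEπ n).app X)) :=
    (HomologySequence.mono_homologyMap_mor₂_iff _ hT i).2
      ((isZero_of_isLE _ (n - 1) i (by lia)).eq_of_src _ _)
  exact isIso_of_mono_of_epi _

theorem nonempty_iso_singleFunctor_homology (X : DerivedCategory C) (n : ℤ)
    [X.IsGE n] [X.IsLE n] :
    Nonempty (X ≅ (singleFunctor C n).obj ((homologyFunctor C n).obj X)) := by
  obtain ⟨M, ⟨e⟩⟩ := exists_iso_singleFunctor_obj_of_isGE_of_isLE X n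
  have eM : (homologyFunctor C n).obj X ≅ M :=
    (homologyFunctor C n).mapIso e ≪≫ (homologyFunctorFactors C n).app _ ≪≫
      (HomologicalComplex.homologyFunctorSingleIso C (ComplexShape.up ℤ) n).app M
  exact ⟨e ≪≫ (singleFunctor C n).mapIso eM.symm⟩

theorem nonempty_truncGELT_iso_singleFunctor_homology (X : DerivedCategory C) (n : ℤ) :
    Nonempty ((TStructure.t.truncGELT n (n + 1)).obj X ≅
      (singleFunctor C n).obj ((homologyFunctor C n).obj X)) := by
  have := isIso_homologyFunctor_map_truncLTι X (lt_add_one n)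
  have := isIso_homologyFunctor_map_truncGEπ ((TStructure.t.truncLT (n + 1)).obj X)
    (le_refl n)
  have eH : (homologyFunctor C n).obj ((TStructure.t.truncGELT n (n + 1)).obj X) ≅
      (homologyFunctor C n).obj X :=
    (asIso ((homologyFunctor C n).map ((TStructure.t.truncGEπ n).app _))).symm ≪≫
      asIso ((homologyFunctor C n).map ((TStructure.t.truncLTι (n + 1)).app X))
  have : ((TStructure.t.truncGELT n (n + 1)).obj X).IsLE n :=
    TStructure.t.isLE_of_le _ (n + 1 - 1) n
  obtain ⟨e⟩ := nonempty_iso_singleFunctor_homology ((TStructure.t.truncGELT n (n + 1)).obj X) n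
  exact ⟨e ≪≫ (singleFunctor C n).mapIso eH⟩

variable (P : ObjectProperty (DerivedCategory C)) [P.IsClosedUnderIsomorphisms]
  [P.IsTriangulatedClosed₂]

theorem prop_truncLT_of_prop_singleFunctor_homology (X : DerivedCategory C) {a b : ℤ} (hab : a ≤ b)
    (hlt : P ((TStructure.t.truncLT a).obj X))
    (hsingle : ∀ i ∈ Set.Ico a b, P ((singleFunctor C i).obj ((homologyFunctor C i).obj X))) :
    P ((TStructure.t.truncLT b).obj X) := by
  induction b, hab using Int.leInduction with
  | base => exact hlt
  | succ n han ih =>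
    obtain ⟨e⟩ := nonempty_truncGELT_iso_singleFunctor_homology X n
    exact P.ext_of_isTriangulatedClosed₂ _
      (TStructure.t.triangleLTLTGELT_distinguished n (n + 1) (by lia) X)
      (ih fun i hi ↦ hsingle i ⟨hi.1, hi.2.trans (lt_add_one n)⟩)
      (P.prop_of_iso e.symm (hsingle n ⟨han, lt_add_one n⟩))

theorem prop_of_prop_singleFunctor_homology (X : DerivedCategory C) {a b : ℤ} (hab : a ≤ b)
    (hlt : P ((TStructure.t.truncLT a).obj X))
    (hsingle : ∀ i ∈ Set.Ico a b, P ((singleFunctor C i).obj ((homologyFunctor C i).obj X)))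
    (hge : P ((TStructure.t.truncGE b).obj X)) : P X :=
  P.ext_of_isTriangulatedClosed₂ _ (TStructure.t.triangleLTGE_distinguished b X)
    (prop_truncLT_of_prop_singleFunctor_homology P X hab hlt hsingle) hge

theorem bounded_Q_obj_of_isZero (K : CochainComplex C ℤ)
    (hK : ∃ a b : ℤ, ∀ i : ℤ, (i < a ∨ b < i) → IsZero (K.X i)) :
    TStructure.t.bounded (Q.obj K) := by
  obtain ⟨a, b, hK⟩ := hK
  have := (K.isStrictlyGE_iff a).2 fun i hi ↦ hK i (.inl hi)
  have := (K.isStrictlyLE_iff b).2 fun i hi ↦ hK i (.inr hi)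
  exact ⟨⟨a, inferInstance⟩, ⟨b, inferInstance⟩⟩

end Truncation

section DerivedCategoryModule

variable {R : Type u} [CommRing R] [HasDerivedCategory.{w} (ModuleCat.{v} R)]

theorem isFiniteLength_homology_Q_obj (K : CochainComplex (ModuleCat.{v} R) ℤ) (i : ℤ)
    (hK : IsFiniteLength R (K.homology i)) :
    IsFiniteLength R ((homologyFunctor (ModuleCat.{v} R) i).obj (Q.obj K)) :=
  ((homologyFunctorFactors _ i).app K).symm.toLinearEquiv.isFiniteLength hK

variable [Small.{v} R] [IsNoetherianRing R]

theorem isFiniteLength_hom_singleFunctor (M N : ModuleCat.{v} R) [Module.Finite R M]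
    (hN : IsFiniteLength R N) (m n : ℤ) :
    IsFiniteLength R ((singleFunctor _ m).obj M ⟶ (singleFunctor _ n).obj N) := by
  obtain hmn | hnm := lt_or_ge m n
  · exact isFiniteLength_hom_of_isLE_of_isGE TStructure.t hmn
  obtain ⟨k, hk⟩ := Int.eq_ofNat_of_zero_le (sub_nonneg.2 hnm)
  have hExt : IsFiniteLength R
      (((singleFunctor _ 0).obj M) ⟶ ((singleFunctor _ 0).obj N)⟦(k : ℤ)⟧) :=
    (Ext.homLinearEquiv (R := R)).isFiniteLength (isFiniteLength_ext M N hN k)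
  let S := singleFunctors (ModuleCat.{v} R)
  have eM : ((singleFunctor _ m).obj M)⟦m⟧ ≅ (singleFunctor _ 0).obj M :=
    (S.shiftIso m 0 m (by lia)).app M
  have eN : ((singleFunctor _ n).obj N)⟦m⟧ ≅ ((singleFunctor _ 0).obj N)⟦(k : ℤ)⟧ :=
    (S.shiftIso m (n - m) n (by lia)).app N ≪≫ ((S.shiftIso k (n - m) 0 (by lia)).app N).symm
  have hshift := (Linear.homCongr R eM eN).symm.isFiniteLength hExt
  exact hshift.of_injective
    (f := (shiftFunctor (DerivedCategory (ModuleCat.{v} R)) m).mapLinearMap R)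
    (Functor.map_injective _)

theorem isFiniteLength_hom_from_singleFunctor (M : ModuleCat.{v} R) [Module.Finite R M] (m : ℤ)
    {Y : DerivedCategory (ModuleCat.{v} R)} (hY : TStructure.t.plus Y)
    (hHY : ∀ i, IsFiniteLength R ((homologyFunctor (ModuleCat.{v} R) i).obj Y)) :
    IsFiniteLength R ((singleFunctor _ m).obj M ⟶ Y) := by
  obtain ⟨a, _⟩ := hY
  refine prop_of_prop_singleFunctor_homology (finiteLengthHomFrom R ((singleFunctor _ m).obj M)) Y
    (a := min a m) (b := m + 1) (by lia) ?_
    (fun i _ ↦ isFiniteLength_hom_singleFunctor M _ (hHY i) m i)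
    (isFiniteLength_hom_of_isLE_of_isGE TStructure.t (lt_add_one m))
  have : Y.IsGE (min a m) := TStructure.t.isGE_of_ge Y _ a
  have : Subsingleton ((singleFunctor _ m).obj M ⟶ (TStructure.t.truncLT (min a m)).obj Y) :=
    ⟨(TStructure.t.isZero_truncLT_obj_of_isGE _ Y).eq_of_tgt⟩
  exact .of_subsingleton

theorem derived_category_hom_finite_general {X Y : DerivedCategory (ModuleCat.{v} R)}
    (hX : TStructure.t.minus X) (hY : TStructure.t.plus Y)
    (hHX : ∀ i, Module.Finite R ((homologyFunctor (ModuleCat.{v} R) i).obj X))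
    (hHY : ∀ i, IsFiniteLength R ((homologyFunctor (ModuleCat.{v} R) i).obj Y)) :
    IsFiniteLength R (X ⟶ Y) := by
  obtain ⟨b, _⟩ := hX
  obtain ⟨a, _⟩ := id hY
  refine prop_of_prop_singleFunctor_homology (finiteLengthHomTo R Y) X
    (a := a) (b := max a (b + 1)) (le_max_left _ _)
    (isFiniteLength_hom_of_isLE_of_isGE TStructure.t (sub_one_lt a))
    (fun i _ ↦ isFiniteLength_hom_from_singleFunctor _ i hY hHY) ?_
  have : X.IsLE (max a (b + 1) - 1) := TStructure.t.isLE_of_le X b _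
  have : Subsingleton ((TStructure.t.truncGE (max a (b + 1))).obj X ⟶ Y) :=
    ⟨(TStructure.t.isZero_truncGE_obj_of_isLE _ _ (sub_add_cancel _ _) X).eq_of_src⟩
  exact .of_subsingleton

end DerivedCategoryModule

theorem derivedHomModule_eq_linear (X Y : CochainComplex (ModuleCat.{0} A) ℤ) :
    derivedHomModule A X Y = Linear.homModule (Q.obj X) (Q.obj Y) := by
  refine Module.ext' _ _ fun r f ↦ ?_
  change f ≫ Q.map (r • 𝟙 Y) = r • f
  rw [CategoryTheory.Functor.map_smul, CategoryTheory.Functor.map_id, Linear.comp_smul,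
    Category.comp_id]

/-- over a commutative Noetherian local ring `A`, for bounded complexes
`X`, `Y` of finitely generated `A`-modules with finite length cohomology, the module of
morphisms `Hom_{D^b(A)}(X, Y)` in the derived category has finite length as an
`A`-module; hence `D^b_f(A)` is Hom-finite. -/
theorem derived_category_hom_finite
    [IsNoetherianRing A] [IsLocalRing A]
    (X Y : CochainComplex (ModuleCat.{0} A) ℤ)
    (hbddX : ∃ a b : ℤ, ∀ i : ℤ, (i < a ∨ b < i) → IsZero (X.X i))
    (hbddY : ∃ a b : ℤ, ∀ i : ℤ, (i < a ∨ b < i) → IsZero (Y.X i))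
    (hfgX : ∀ i : ℤ, Module.Finite A (X.X i))
    (hfgY : ∀ i : ℤ, Module.Finite A (Y.X i))
    (hflX : ∀ i : ℤ, IsFiniteLength A (X.homology i))
    (hflY : ∀ i : ℤ, IsFiniteLength A (Y.homology i)) :
    letI := derivedHomModule A X Y
    IsFiniteLength A (DerivedCategory.Q.obj X ⟶ DerivedCategory.Q.obj Y) := by
  rw [derivedHomModule_eq_linear]
  exact derived_category_hom_finite_general (bounded_Q_obj_of_isZero X hbddX).2
    (bounded_Q_obj_of_isZero Y hbddY).1
    (fun i ↦ finite_of_isFiniteLength (isFiniteLength_homology_Q_obj X i (hflX i)))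
    (fun i ↦ isFiniteLength_homology_Q_obj Y i (hflY i))
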